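/- Let H be a complex Hilbert space with dim H ≥ 3 and let φ : B_s(H) → B_s(H) be an additive surjective map such that for all A, B ∈ B_s(H), A ↔_q B if and only if φ(A) ↔_q φ(B). Then there exist a nonzero real scalar c, an operator U on H that is either unitary or antiunitary, and an additive function f : B_s(H) → ℝ such that φ(A) = c·U A U* + f(A)·I for all A ∈ B_s(H). -/

import Mathlib

noncomputable section

variable {H : Type*} [NormedAddCommGroup H] [InnerProductSpace ℂ H] [CompleteSpace H]

/-- `A ↔_q B`: the self-adjoint operators `A` and `B` quasi-commute, i.e.
they either commute or anti-commute. -/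
def CommQ (A B : selfAdjoint (H →L[ℂ] H)) : Prop :=
  (A : H →L[ℂ] H) * (B : H →L[ℂ] H) = (B : H →L[ℂ] H) * (A : H →L[ℂ] H) ∨
  (A : H →L[ℂ] H) * (B : H →L[ℂ] H) + (B : H →L[ℂ] H) * (A : H →L[ℂ] H) = 0

open scoped InnerProductSpace ComplexConjugate

/-- The bounded self-adjoint operators on `H`. -/
abbrev Obs (H : Type*) [NormedAddCommGroup H] [InnerProductSpace ℂ H] [CompleteSpace H] : Type _ :=
  selfAdjoint (H →L[ℂ] H)

instance : Module ℝ (Obs H) := inferInstanceAs (Module ℝ (selfAdjoint (H →L[ℂ] H)))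

instance : DistribSMul ℝ (Obs H) := Module.toDistribMulAction.toDistribSMul

instance : MulAction ℝ (Obs H) := Module.toDistribMulAction.toMulAction

/-- The self-adjoint operator `z ↦ ⟪y, z⟫ x + ⟪x, z⟫ y`. -/
def symRank (x y : H) : Obs H :=
  ⟨InnerProductSpace.rankOne ℂ x y + InnerProductSpace.rankOne ℂ y x, by
    rw [selfAdjoint.mem_iff, star_add, ContinuousLinearMap.star_eq_adjoint,
      ContinuousLinearMap.star_eq_adjoint, InnerProductSpace.adjoint_rankOne,
      InnerProductSpace.adjoint_rankOne, add_comm]⟩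

@[simp]
theorem symRank_apply (x y z : H) :
    (symRank x y : H →L[ℂ] H) z = ⟪y, z⟫_ℂ • x + ⟪x, z⟫_ℂ • y := rfl

theorem selfAdjoint_ext {A B : Obs H} (h : ∀ z, (A : H →L[ℂ] H) z = (B : H →L[ℂ] H) z) : A = B :=
  Subtype.ext (ContinuousLinearMap.ext h)

@[simp]
theorem selfAdjoint_add_apply (A B : Obs H) (z : H) :
    ((A + B : Obs H) : H →L[ℂ] H) z = (A : H →L[ℂ] H) z + (B : H →L[ℂ] H) z := rfl

@[simp]
theorem selfAdjoint_sub_apply (A B : Obs H) (z : H) :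
    ((A - B : Obs H) : H →L[ℂ] H) z = (A : H →L[ℂ] H) z - (B : H →L[ℂ] H) z := rfl

@[simp]
theorem selfAdjoint_smul_apply (t : ℝ) (A : Obs H) (z : H) :
    ((t • A : Obs H) : H →L[ℂ] H) z = (t : ℂ) • (A : H →L[ℂ] H) z := rfl

@[simp]
theorem selfAdjoint_one_apply (z : H) : ((1 : Obs H) : H →L[ℂ] H) z = z := rfl

@[simp]
theorem selfAdjoint_zero_apply (z : H) : ((0 : Obs H) : H →L[ℂ] H) z = 0 := rfl

theorem selfAdjoint_inner (A : Obs H) (x y : H) :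
    ⟪(A : H →L[ℂ] H) x, y⟫_ℂ = ⟪x, (A : H →L[ℂ] H) y⟫_ℂ :=
  (ContinuousLinearMap.isSelfAdjoint_iff_isSymmetric.mp A.2) x y

theorem symRank_comm (x y : H) : symRank x y = symRank y x :=
  selfAdjoint_ext fun z => by simp [add_comm]

theorem symRank_add_right (x y z : H) : symRank x (y + z) = symRank x y + symRank x z :=
  selfAdjoint_ext fun w => by
    simp only [symRank_apply, selfAdjoint_add_apply, inner_add_left]; module

theorem symRank_add_left (x y z : H) : symRank (x + y) z = symRank x z + symRank y z := by
  simp only [symRank_comm _ z, symRank_add_right]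

theorem symRank_smul_right (t : ℝ) (x y : H) : symRank x ((t : ℂ) • y) = t • symRank x y :=
  selfAdjoint_ext fun w => by simp; module

theorem symRank_smul_left (c : ℂ) (x y : H) : symRank (c • x) y = symRank x (conj c • y) :=
  selfAdjoint_ext fun w => by simp; module

theorem symRank_smul_smul_self (c : ℂ) (x : H) :
    symRank (c • x) (c • x) = (‖c‖ ^ 2) • symRank x x := by
  refine selfAdjoint_ext fun w => ?_
  have h : conj c * c = ((‖c‖ ^ 2 : ℝ) : ℂ) := by
    rw [Complex.conj_mul']; norm_cast
  simp only [symRank_apply, selfAdjoint_smul_apply, inner_smul_left, smul_smul, ← h]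
  module

theorem inner_self_eq_ofReal {E : Type*} [NormedAddCommGroup E] [InnerProductSpace ℂ E]
    (x : E) : ⟪x, x⟫_ℂ = ((‖x‖ ^ 2 : ℝ) : ℂ) := by
  rw [inner_self_eq_norm_sq_to_K]; norm_cast

theorem inner_self_of_unit {E : Type*} [NormedAddCommGroup E] [InnerProductSpace ℂ E]
    {x : E} (hx : ‖x‖ = 1) : ⟪x, x⟫_ℂ = 1 := by
  rw [inner_self_eq_norm_sq_to_K, hx]; simp

theorem exists_unit_orthogonal {E : Type*} [NormedAddCommGroup E] [InnerProductSpace ℂ E]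
    (hdim : 3 ≤ Module.rank ℂ E) (x y : E) :
    ∃ z : E, ‖z‖ = 1 ∧ ⟪x, z⟫_ℂ = 0 ∧ ⟪y, z⟫_ℂ = 0 := by
  have hne : (Submodule.span ℂ ({x, y} : Set E)) ≠ ⊤ := by
    intro h
    have h2 := rank_span_le (R := ℂ) ({x, y} : Set E)
    rw [h, rank_top] at h2
    have h3 : Cardinal.mk ({x, y} : Set E) ≤ 2 := by
      refine (Cardinal.mk_insert_le).trans ?_
      simp [one_add_one_eq_two]
    exact absurd (hdim.trans (h2.trans h3)) (by norm_num)
  have : FiniteDimensional ℂ (Submodule.span ℂ ({x, y} : Set E)) :=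
    FiniteDimensional.span_of_finite ℂ (Set.toFinite _)
  have h2 : (Submodule.span ℂ ({x, y} : Set E))ᗮ ≠ ⊥ := fun h =>
    hne ((Submodule.orthogonal_eq_bot_iff).mp h)
  obtain ⟨z, hz, hz0⟩ := Submodule.exists_mem_ne_zero_of_ne_bot h2
  refine ⟨((‖z‖⁻¹ : ℝ) : ℂ) • z, ?_, ?_, ?_⟩
  · rw [norm_smul]; simp [norm_ne_zero_iff.mpr hz0]
  · rw [inner_smul_right, (Submodule.mem_orthogonal _ _).mp hz x (Submodule.subset_span (by simp)),
      mul_zero]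
  · rw [inner_smul_right, (Submodule.mem_orthogonal _ _).mp hz y (Submodule.subset_span (by simp)),
      mul_zero]

/-- A linear map for which every unit vector is an eigenvector is a homothety. -/
theorem exists_eq_smul_of_unit_eigenvector {E : Type*} [NormedAddCommGroup E] [InnerProductSpace ℂ E]
    (T : E →ₗ[ℂ] E)
    (h : ∀ x : E, ‖x‖ = 1 → ∃ c : ℂ, T x = c • x) : ∃ c : ℂ, ∀ x, T x = c • x := by
  obtain ⟨a, ha⟩ := LinearMap.exists_eq_smul_id_of_forall_notLinearIndependent (f := T) fun v => by
    by_cases hv : v = 0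
    · simp [hv, linearIndependent_fin2]
    · rw [LinearIndependent.pair_iff' hv]
      push Not
      obtain ⟨c, hc⟩ := h (((‖v‖⁻¹ : ℝ) : ℂ) • v) (by
        rw [norm_smul]; simp [norm_ne_zero_iff.mpr hv])
      refine ⟨c, ?_⟩
      have h0 : ((‖v‖⁻¹ : ℝ) : ℂ) ≠ 0 := by simpa using hv
      rw [map_smul, smul_comm] at hc
      exact (smul_right_injective E h0 hc).symm
  exact ⟨a, fun x => by simp [ha]⟩

/-- Being a real multiple of the identity. -/
def IsScalarOp (A : Obs H) : Prop := ∃ r : ℝ, A = r • (1 : Obs H)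

/-- Commutation of self-adjoint operators, as operators on `H`. -/
def Comm (A B : Obs H) : Prop :=
  ∀ z, (A : H →L[ℂ] H) ((B : H →L[ℂ] H) z) = (B : H →L[ℂ] H) ((A : H →L[ℂ] H) z)

/-- Anticommutation of self-adjoint operators, as operators on `H`. -/
def Anti (A B : Obs H) : Prop :=
  ∀ z, (A : H →L[ℂ] H) ((B : H →L[ℂ] H) z) + (B : H →L[ℂ] H) ((A : H →L[ℂ] H) z) = 0

theorem commQ_iff_comm_or_anti {A B : Obs H} : CommQ A B ↔ Comm A B ∨ Anti A B := by
  unfold CommQ Comm Anti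
  simp only [ContinuousLinearMap.ext_iff]
  rfl

theorem Comm.commQ {A B : Obs H} (h : Comm A B) : CommQ A B :=
  commQ_iff_comm_or_anti.mpr (Or.inl h)

theorem Comm.symm {A B : Obs H} (h : Comm A B) : Comm B A := fun z => (h z).symm

theorem Comm.add_right {A B C : Obs H} (h : Comm A B) (h' : Comm A C) : Comm A (B + C) :=
  fun z => by
    simp [h z, h' z]

theorem Comm.sub_right {A B C : Obs H} (h : Comm A B) (h' : Comm A C) : Comm A (B - C) :=
  fun z => by
    simp [h z, h' z]

theorem Comm.smul_right {A B : Obs H} (h : Comm A B) (t : ℝ) : Comm A (t • B) := fun z => by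
  simp [h z]

theorem IsScalarOp.comm {B : Obs H} (h : IsScalarOp B) (A : Obs H) : Comm A B := by
  obtain ⟨r, rfl⟩ := h
  exact fun z => by simp

theorem Comm.eigenvector {A : Obs H} {x : H} (hx : ‖x‖ = 1) (h : Comm A (symRank x x)) :
    (A : H →L[ℂ] H) x = ⟪x, (A : H →L[ℂ] H) x⟫_ℂ • x := by
  have := h x
  simp only [symRank_apply, inner_self_of_unit hx, one_smul, ← two_smul ℂ, map_smul] at this
  exact smul_right_injective H (two_ne_zero (α := ℂ)) this

theorem comm_symRank_self_of_eigenvector {A : Obs H} {x : H} {r : ℝ}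
    (h : (A : H →L[ℂ] H) x = (r : ℂ) • x) : Comm A (symRank x x) := fun z => by
  have : ⟪x, (A : H →L[ℂ] H) z⟫_ℂ = r * ⟪x, z⟫_ℂ := by
    rw [← selfAdjoint_inner, h, inner_smul_left]; simp
  simp only [symRank_apply, map_add, map_smul, h, this]
  module

theorem inner_self_apply_real (A : Obs H) (x : H) :
    ∃ r : ℝ, ⟪x, (A : H →L[ℂ] H) x⟫_ℂ = r := by
  obtain ⟨r, hr⟩ := Complex.conj_eq_iff_real.mp
    ((inner_conj_symm _ _).trans (selfAdjoint_inner A x x))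
  exact ⟨r, hr⟩

theorem isScalarOp_of_comm_symRank [Nontrivial H] {A : Obs H}
    (h : ∀ x : H, ‖x‖ = 1 → Comm A (symRank x x)) : IsScalarOp A := by
  obtain ⟨c, hc⟩ := exists_eq_smul_of_unit_eigenvector ((A : H →L[ℂ] H) : H →ₗ[ℂ] H)
    fun x hx => ⟨_, (h x hx).eigenvector hx⟩
  let _ : NormedSpace ℝ H := NormedSpace.restrictScalars ℝ ℂ H
  obtain ⟨x, hx⟩ := exists_norm_eq H zero_le_one
  obtain ⟨r, hr⟩ := inner_self_apply_real A x
  have : (A : H →L[ℂ] H) x = c • x := hc x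
  rw [this, inner_smul_right, inner_self_of_unit hx, mul_one] at hr
  exact ⟨r, selfAdjoint_ext fun z => by simpa [hr] using hc z⟩

theorem comm_of_commQ {A B : Obs H} (h : CommQ A B) (h' : CommQ A (B + 1)) : Comm A B := by
  rw [commQ_iff_comm_or_anti] at h h'
  rcases h with h | h
  · exact h
  rcases h' with h' | h'
  · exact fun z => by simpa using h' z
  · have h0 : ∀ z, (A : H →L[ℂ] H) z = 0 := fun z => by
      have h1 := h z
      have h2 := h' z
      simp only [selfAdjoint_add_apply, selfAdjoint_one_apply, map_add] at h2
      have h3 : (2 : ℂ) • (A : H →L[ℂ] H) z = 0 := by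
        rw [← h2, ← sub_zero (_ + _), ← h1]; module
      simpa using h3
    exact fun z => by simp [h0]

theorem isScalarOp_iff_commQ [Nontrivial H] {A : Obs H} : IsScalarOp A ↔ ∀ B, CommQ A B :=
  ⟨fun h B => (h.comm B).symm.commQ, fun h =>
    isScalarOp_of_comm_symRank fun _ _ => comm_of_commQ (h _) (h _)⟩

/-- The symmetry `z ↦ 2 ⟪e, z⟫ e - z` attached to a unit vector `e`. -/
def axisSymmetry (e : H) : Obs H := symRank e e - 1

@[simp]
theorem axisSymmetry_apply (e z : H) :
    (axisSymmetry e : H →L[ℂ] H) z = (2 * ⟪e, z⟫_ℂ) • e - z := by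
  simp [axisSymmetry, two_mul, add_smul]

theorem comm_axisSymmetry_right {A : Obs H} {e : H} :
    Comm A (axisSymmetry e) ↔ Comm A (symRank e e) := by
  have h1 : Comm A (1 : Obs H) := fun z => rfl
  refine ⟨fun h => ?_, fun h => h.sub_right h1⟩
  have := h.add_right h1
  rwa [axisSymmetry, sub_add_cancel] at this

theorem anti_axisSymmetry_symRank {e x : H} (he : ‖e‖ = 1) (hx : ⟪e, x⟫_ℂ = 0) :
    Anti (axisSymmetry e) (symRank e x) := fun z => by
  have hx' : ⟪x, e⟫_ℂ = 0 := inner_eq_zero_symm.mp hx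
  simp only [axisSymmetry_apply, symRank_apply, inner_add_right, inner_sub_right,
    inner_smul_right, inner_self_of_unit he, hx, hx']
  module

theorem eq_symRank_of_anti_axisSymmetry {e : H} {B : Obs H} (he : ‖e‖ = 1)
    (h : Anti (axisSymmetry e) B) :
    ⟪e, (B : H →L[ℂ] H) e⟫_ℂ = 0 ∧ B = symRank e ((B : H →L[ℂ] H) e) := by
  have he0 : e ≠ 0 := norm_ne_zero_iff.mp (by rw [he]; exact one_ne_zero)
  have h0 : ⟪e, (B : H →L[ℂ] H) e⟫_ℂ = 0 := by
    have h1 := h e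
    simp only [axisSymmetry_apply, inner_self_of_unit he, map_sub, map_smul] at h1
    have h2 : (2 * ⟪e, (B : H →L[ℂ] H) e⟫_ℂ) • e = 0 := by rw [← h1]; module
    simpa [he0] using h2
  refine ⟨h0, selfAdjoint_ext fun z => ?_⟩
  have h1 := h z
  simp only [axisSymmetry_apply, map_sub, map_smul] at h1
  have h2 : (2 : ℂ) • (B : H →L[ℂ] H) z =
      (2 : ℂ) • (symRank e ((B : H →L[ℂ] H) e) : H →L[ℂ] H) z := by
    rw [← sub_eq_zero, ← neg_eq_zero, ← h1, symRank_apply, selfAdjoint_inner]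
    module
  exact smul_right_injective H two_ne_zero h2

theorem eq_zero_of_comm_axisSymmetry_symRank {e x : H} (he : ‖e‖ = 1) (hx : ⟪e, x⟫_ℂ = 0)
    (h : Comm (axisSymmetry e) (symRank e x)) : x = 0 := by
  have hx' : ⟪x, e⟫_ℂ = 0 := inner_eq_zero_symm.mp hx
  have h1 := h e
  simp only [axisSymmetry_apply, symRank_apply, inner_self_of_unit he, hx', hx,
    inner_add_right, inner_sub_right, inner_smul_right] at h1
  have h2 : (2 : ℂ) • x = 0 := by
    rw [← sub_eq_zero, ← neg_eq_zero] at h1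
    rw [← h1, ← sub_eq_zero]
    module
  simpa using h2

theorem exists_add_symRank (A : Obs H) {x : H} (hx : ‖x‖ = 1) :
    ∃ (C : Obs H) (r : ℝ) (w : H), ⟪x, w⟫_ℂ = 0 ∧ A = C + symRank x w ∧ Comm C (symRank x x) ∧
      (A : H →L[ℂ] H) x = (r : ℂ) • x + w ∧ (C : H →L[ℂ] H) x = (r : ℂ) • x := by
  obtain ⟨r, hr⟩ := inner_self_apply_real A x
  have h0 : ⟪x, (A : H →L[ℂ] H) x - (r : ℂ) • x⟫_ℂ = 0 := by
    rw [inner_sub_right, inner_smul_right, hr, inner_self_of_unit hx]; simp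
  have hC : ((A - symRank x ((A : H →L[ℂ] H) x - (r : ℂ) • x) : Obs H) : H →L[ℂ] H) x =
      (r : ℂ) • x := by
    rw [selfAdjoint_sub_apply, symRank_apply, inner_self_of_unit hx, inner_eq_zero_symm.mp h0]
    module
  exact ⟨A - symRank x ((A : H →L[ℂ] H) x - (r : ℂ) • x), r, _, h0, by abel,
    comm_symRank_self_of_eigenvector hC, by abel, hC⟩

theorem exists_real_smul_of_comm_symRank {e x y : H} (he : ‖e‖ = 1) (hx : ⟪e, x⟫_ℂ = 0)
    (hy : ⟪e, y⟫_ℂ = 0) (hx0 : x ≠ 0) (h : Comm (symRank e x) (symRank e y)) :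
    ∃ t : ℝ, y = (t : ℂ) • x := by
  have hx' : ⟪x, e⟫_ℂ = 0 := inner_eq_zero_symm.mp hx
  have hy' : ⟪y, e⟫_ℂ = 0 := inner_eq_zero_symm.mp hy
  have he0 : e ≠ 0 := norm_ne_zero_iff.mp (by rw [he]; exact one_ne_zero)
  have h1 := h e
  have h2 := h x
  simp only [symRank_apply, inner_self_of_unit he, hx', hx, hy', hy, inner_smul_right,
    mul_zero, zero_smul, zero_add, add_zero, one_smul, mul_one] at h1 h2
  have h3 : ⟪x, y⟫_ℂ = ⟪y, x⟫_ℂ := smul_left_injective ℂ he0 h1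
  obtain ⟨r, hr⟩ := Complex.conj_eq_iff_real.mp ((inner_conj_symm x y).trans h3)
  have hne : ((‖x‖ ^ 2 : ℝ) : ℂ) ≠ 0 := by simpa using hx0
  refine ⟨(‖x‖ ^ 2)⁻¹ * r, ?_⟩
  rw [inner_self_eq_ofReal] at h2
  rw [Complex.ofReal_mul, mul_smul, ← hr, h2, smul_smul, Complex.ofReal_inv, inv_mul_cancel₀ hne,
    one_smul]

theorem comm_symRank_trans {e x y z : H} (he : ‖e‖ = 1) (hx : ⟪e, x⟫_ℂ = 0)
    (hy : ⟪e, y⟫_ℂ = 0) (hz : ⟪e, z⟫_ℂ = 0) (hx0 : x ≠ 0) (h : Comm (symRank e x) (symRank e y))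
    (h' : Comm (symRank e x) (symRank e z)) : Comm (symRank e y) (symRank e z) := by
  obtain ⟨t, rfl⟩ := exists_real_smul_of_comm_symRank he hx hy hx0 h
  obtain ⟨s, rfl⟩ := exists_real_smul_of_comm_symRank he hx hz hx0 h'
  rw [symRank_smul_right, symRank_smul_right]
  exact ((Comm.smul_right (fun _ => rfl) t).symm).smul_right s

/-- Additive surjections preserving quasi-commutativity in both directions. -/
structure QPreserver (φ : Obs H → Obs H) : Prop where
  map_add : ∀ A B, φ (A + B) = φ A + φ B
  surj : Function.Surjective φ
  commQ_iff : ∀ A B, CommQ A B ↔ CommQ (φ A) (φ B)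

namespace QPreserver

variable {φ : Obs H → Obs H}

theorem map_zero (hφ : QPreserver φ) : φ 0 = 0 := by
  simpa using hφ.map_add 0 0

theorem map_sub (hφ : QPreserver φ) (A B : Obs H) : φ (A - B) = φ A - φ B := by
  rw [eq_sub_iff_add_eq, ← hφ.map_add, sub_add_cancel]

theorem isScalarOp_iff [Nontrivial H] (hφ : QPreserver φ) {A : Obs H} :
    IsScalarOp (φ A) ↔ IsScalarOp A := by
  rw [isScalarOp_iff_commQ, isScalarOp_iff_commQ, hφ.surj.forall]
  simp only [hφ.commQ_iff A]

theorem comm_iff [Nontrivial H] (hφ : QPreserver φ) {A B : Obs H} :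
    Comm (φ A) (φ B) ↔ Comm A B := by
  have hone : IsScalarOp (1 : Obs H) := ⟨1, (one_smul ℝ _).symm⟩
  refine ⟨fun h => ?_, fun h => ?_⟩
  · refine comm_of_commQ ((hφ.commQ_iff _ _).mpr (h.commQ))
      ((hφ.commQ_iff _ _).mpr (Comm.commQ ?_))
    rw [hφ.map_add]
    exact h.add_right ((hφ.isScalarOp_iff.mpr hone).comm _)
  · obtain ⟨C, hC⟩ := hφ.surj 1
    refine comm_of_commQ ((hφ.commQ_iff _ _).mp (h.commQ)) ?_
    rw [← hC, ← hφ.map_add]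
    refine (hφ.commQ_iff _ _).mp ((h.add_right ?_).commQ)
    exact (hφ.isScalarOp_iff.mp (hC ▸ hone)).comm _

theorem anti_iff [Nontrivial H] (hφ : QPreserver φ) {A B : Obs H} (h : ¬ Comm A B) :
    Anti (φ A) (φ B) ↔ Anti A B := by
  have h' : ¬ Comm (φ A) (φ B) := fun hc => h (hφ.comm_iff.mp hc)
  have := hφ.commQ_iff A B
  rw [commQ_iff_comm_or_anti, commQ_iff_comm_or_anti] at this
  tauto

end QPreserver

section EigenSpaces

variable {A : Obs H} {a : ℝ}

theorem eq_smul_axisSymmetry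
    (hsq : ∀ z, (A : H →L[ℂ] H) ((A : H →L[ℂ] H) z) = ((a ^ 2 : ℝ) : ℂ) • z)
    {f : H} (hAf : (A : H →L[ℂ] H) f = (a : ℂ) • f)
    (h : ∀ w, (A : H →L[ℂ] H) w = (a : ℂ) • w → w = ⟪f, w⟫_ℂ • f) : A = a • axisSymmetry f := by
  refine selfAdjoint_ext fun z => ?_
  have h1 := h ((A : H →L[ℂ] H) z + (a : ℂ) • z) (by
    rw [map_add, map_smul, hsq]; push_cast; module)
  rw [inner_add_right, ← selfAdjoint_inner, hAf, inner_smul_left, inner_smul_right,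
    Complex.conj_ofReal] at h1
  rw [eq_sub_of_add_eq h1, selfAdjoint_smul_apply, axisSymmetry_apply]
  module

theorem inner_eq_zero_of_eigenvectors (ha : a ≠ 0) {u v : H}
    (hu : (A : H →L[ℂ] H) u = (a : ℂ) • u) (hv : (A : H →L[ℂ] H) v = ((-a : ℝ) : ℂ) • v) :
    ⟪u, v⟫_ℂ = 0 := by
  have h := selfAdjoint_inner A u v
  rw [hu, hv, inner_smul_left, inner_smul_right, Complex.conj_ofReal] at h
  have h2 : (2 * (a : ℂ)) * ⟪u, v⟫_ℂ = 0 := by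
    push_cast at h
    linear_combination h
  simpa [ha] using h2

theorem anti_symRank_of_eigenvectors {u v : H}
    (hu : (A : H →L[ℂ] H) u = (a : ℂ) • u) (hv : (A : H →L[ℂ] H) v = ((-a : ℝ) : ℂ) • v) :
    Anti A (symRank u v) := fun z => by
  simp only [symRank_apply, map_add, map_smul, ← selfAdjoint_inner, hu, hv, inner_smul_left,
    Complex.conj_ofReal]
  push_cast
  module

theorem not_comm_symRank_of_eigenvectors (ha : a ≠ 0) {u v : H} (hu0 : u ≠ 0) (hv0 : v ≠ 0)
    (hu : (A : H →L[ℂ] H) u = (a : ℂ) • u) (hv : (A : H →L[ℂ] H) v = ((-a : ℝ) : ℂ) • v) :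
    ¬ Comm A (symRank u v) := fun h => by
  have h0 := inner_eq_zero_of_eigenvectors ha hu hv
  have h1 := h v
  simp only [symRank_apply, map_add, map_smul, hu, hv, h0] at h1
  have h2 : (2 * (a * ⟪v, v⟫_ℂ)) • u = 0 := by
    rw [← sub_eq_zero] at h1
    rw [← h1]
    push_cast
    module
  simp [ha, hu0, hv0] at h2

/-- A self-adjoint square root of `a ^ 2` with both eigenvalues `a` and `-a` is, up to a real
factor, the symmetry attached to a unit vector as soon as commutation is transitive among the
operators anticommuting with it. -/
theorem exists_axisSymmetry_of_sq (ha : a ≠ 0)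
    (hsq : ∀ z, (A : H →L[ℂ] H) ((A : H →L[ℂ] H) z) = ((a ^ 2 : ℝ) : ℂ) • z)
    {u v : H} (hu1 : ‖u‖ = 1) (hv1 : ‖v‖ = 1)
    (hu : (A : H →L[ℂ] H) u = (a : ℂ) • u) (hv : (A : H →L[ℂ] H) v = ((-a : ℝ) : ℂ) • v)
    (htrans : ∀ B C D : Obs H, Anti A B → Anti A C → Anti A D → ¬ Comm A B → ¬ Comm A C →
      ¬ Comm A D → Comm B C → Comm B D → Comm C D) :
    ∃ (α : ℝ) (f : H), α ≠ 0 ∧ ‖f‖ = 1 ∧ A = α • axisSymmetry f := by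
  by_cases h1 : ∀ w, (A : H →L[ℂ] H) w = (a : ℂ) • w → w = ⟪u, w⟫_ℂ • u
  · exact ⟨a, u, ha, hu1, eq_smul_axisSymmetry hsq hu h1⟩
  by_cases h2 : ∀ w, (A : H →L[ℂ] H) w = ((-a : ℝ) : ℂ) • w → w = ⟪v, w⟫_ℂ • v
  · exact ⟨-a, v, neg_ne_zero.mpr ha, hv1,
      eq_smul_axisSymmetry (by simpa using hsq) hv h2⟩
  exfalso
  push Not at h1 h2
  obtain ⟨w, hw, hwu⟩ := h1
  obtain ⟨w', hw', hwv⟩ := h2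
  have key : ∀ (b : ℝ) (u w : H), ‖u‖ = 1 → (A : H →L[ℂ] H) u = (b : ℂ) • u →
      (A : H →L[ℂ] H) w = (b : ℂ) • w → w ≠ ⟪u, w⟫_ℂ • u →
      ∃ x : H, x ≠ 0 ∧ ⟪u, x⟫_ℂ = 0 ∧ (A : H →L[ℂ] H) x = (b : ℂ) • x := by
    intro b u w hu1 hu hw hne
    refine ⟨w - ⟪u, w⟫_ℂ • u, sub_ne_zero.mpr hne, ?_, ?_⟩
    · rw [inner_sub_right, inner_smul_right, inner_self_of_unit hu1, mul_one, sub_self]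
    · rw [_root_.map_sub, map_smul, hu, hw]; module
  obtain ⟨x, hx0, hux, hx⟩ := key a u w hu1 hu hw hwu
  obtain ⟨y, hy0, hvy, hy⟩ := key (-a) v w' hv1 hv hw' hwv
  have hix : (A : H →L[ℂ] H) (Complex.I • x) = (a : ℂ) • Complex.I • x := by
    rw [map_smul, hx, smul_comm]
  have hix0 : Complex.I • x ≠ 0 := smul_ne_zero Complex.I_ne_zero hx0
  have hu0 : u ≠ 0 := norm_ne_zero_iff.mp (by rw [hu1]; exact one_ne_zero)
  have hv0 : v ≠ 0 := norm_ne_zero_iff.mp (by rw [hv1]; exact one_ne_zero)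
  have hxv := inner_eq_zero_of_eigenvectors ha hx hv
  have hxy := inner_eq_zero_of_eigenvectors ha hx hy
  have huy := inner_eq_zero_of_eigenvectors ha hu hy
  have orth : ∀ x : H, ⟪u, x⟫_ℂ = 0 → ⟪x, v⟫_ℂ = 0 → Comm (symRank u v) (symRank x y) := by
    intro x hux hxv z
    simp only [symRank_apply, inner_add_right, inner_smul_right, hux, hxv,
      huy, hvy, inner_eq_zero_symm.mp hux, inner_eq_zero_symm.mp hxv, inner_eq_zero_symm.mp huy,
      inner_eq_zero_symm.mp hvy]
    simp
  have hc := htrans _ _ _ (anti_symRank_of_eigenvectors hu hv) (anti_symRank_of_eigenvectors hx hy)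
    (anti_symRank_of_eigenvectors hix hy) (not_comm_symRank_of_eigenvectors ha hu0 hv0 hu hv)
    (not_comm_symRank_of_eigenvectors ha hx0 hy0 hx hy)
    (not_comm_symRank_of_eigenvectors ha hix0 hy0 hix hy) (orth x hux hxv)
    (orth _ (by rw [inner_smul_right, hux, mul_zero]) (by rw [inner_smul_left, hxv, mul_zero])) x
  simp only [symRank_apply, inner_add_right, inner_smul_right, inner_smul_left, hxy,
    inner_eq_zero_symm.mp hxy, Complex.conj_I] at hc
  have h3 : (2 * (Complex.I * ⟪x, x⟫_ℂ * ⟪y, y⟫_ℂ)) • x = 0 := by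
    rw [← sub_eq_zero, ← neg_eq_zero] at hc
    rw [← hc]
    module
  simp [hx0, hy0] at h3

end EigenSpaces

namespace QPreserver

variable {φ : Obs H → Obs H}

theorem not_isScalarOp_axisSymmetry [Nontrivial H] (hdim : 3 ≤ Module.rank ℂ H) {e : H}
    (he : ‖e‖ = 1) : ¬ IsScalarOp (axisSymmetry e) := by
  obtain ⟨x, hx1, hx, -⟩ := exists_unit_orthogonal hdim e e
  intro h
  have := eq_zero_of_comm_axisSymmetry_symRank he hx (h.comm _).symm
  simp [this] at hx1

theorem exists_sq_eq [Nontrivial H] (hφ : QPreserver φ) {e : H} (he : ‖e‖ = 1) :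
    ∃ r : ℝ, ∀ z, (φ (axisSymmetry e) : H →L[ℂ] H) ((φ (axisSymmetry e) : H →L[ℂ] H) z) =
      (r : ℂ) • z := by
  set A := φ (axisSymmetry e) with hA
  have hs : IsSelfAdjoint ((A : H →L[ℂ] H) * (A : H →L[ℂ] H)) := by
    rw [IsSelfAdjoint, star_mul, A.2]
  let S : Obs H := ⟨_, hs⟩
  have hS : ∀ z, (S : H →L[ℂ] H) z = (A : H →L[ℂ] H) ((A : H →L[ℂ] H) z) := fun z => rfl
  have hcomm : ∀ B, Comm A B → Comm S B := fun B h z => by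
    rw [hS, hS, h z, h]
  have hanti : ∀ B, Anti A B → Comm S B := fun B h z => by
    rw [hS, hS, eq_neg_of_add_eq_zero_left (h z), map_neg, eq_neg_of_add_eq_zero_left (h _),
      neg_neg]
  have hall : ∀ B, Comm S B := fun B => by
    obtain ⟨B, rfl⟩ := hφ.surj B
    obtain ⟨C, r, x, hx, rfl, hC, -, -⟩ := exists_add_symRank B he
    rw [hφ.map_add]
    refine (hcomm _ (hφ.comm_iff.mpr (comm_axisSymmetry_right.mpr hC).symm)).add_right ?_
    by_cases h : Comm (axisSymmetry e) (symRank e x)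
    · exact hcomm _ (hφ.comm_iff.mpr h)
    · exact hanti _ ((hφ.anti_iff h).mpr (anti_axisSymmetry_symRank he hx))
  obtain ⟨r, hr⟩ := isScalarOp_of_comm_symRank fun x _ => hall (symRank x x)
  exact ⟨r, fun z => by rw [← hS, hr]; simp⟩

theorem exists_unit_eigenvector {A : Obs H} {a b : ℝ}
    (hsq : ∀ z, (A : H →L[ℂ] H) ((A : H →L[ℂ] H) z) = ((b ^ 2 : ℝ) : ℂ) • z) (hab : a ^ 2 = b ^ 2)
    (h : ¬ IsScalarOp A) : ∃ u : H, ‖u‖ = 1 ∧ (A : H →L[ℂ] H) u = (a : ℂ) • u := by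
  have : ∃ z, (A : H →L[ℂ] H) z + (a : ℂ) • z ≠ 0 := by
    by_contra! hc
    exact h ⟨-a, selfAdjoint_ext fun z => by
      rw [eq_neg_of_add_eq_zero_left (hc z)]; simp⟩
  obtain ⟨z, hz⟩ := this
  refine ⟨((‖(A : H →L[ℂ] H) z + (a : ℂ) • z‖⁻¹ : ℝ) : ℂ) • ((A : H →L[ℂ] H) z + (a : ℂ) • z),
    ?_, ?_⟩
  · rw [norm_smul, Complex.norm_real, norm_inv, norm_norm,
      inv_mul_cancel₀ (norm_ne_zero_iff.mpr hz)]
  · rw [map_smul, _root_.map_add, map_smul, hsq, ← hab]; push_cast; module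

theorem exists_axisSymmetry [Nontrivial H] (hφ : QPreserver φ) (hdim : 3 ≤ Module.rank ℂ H) {e : H}
    (he : ‖e‖ = 1) :
    ∃ (α : ℝ) (f : H), α ≠ 0 ∧ ‖f‖ = 1 ∧ φ (axisSymmetry e) = α • axisSymmetry f := by
  obtain ⟨r, hr⟩ := hφ.exists_sq_eq he
  have hns : ¬ IsScalarOp (φ (axisSymmetry e)) := fun h =>
    not_isScalarOp_axisSymmetry hdim he (hφ.isScalarOp_iff.mp h)
  have hnorm : ∀ z, ‖(φ (axisSymmetry e) : H →L[ℂ] H) z‖ ^ 2 = r * ‖z‖ ^ 2 := fun z => by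
    have h1 := selfAdjoint_inner (φ (axisSymmetry e)) z ((φ (axisSymmetry e) : H →L[ℂ] H) z)
    rw [hr, inner_smul_right, inner_self_eq_ofReal, inner_self_eq_ofReal] at h1
    exact_mod_cast h1
  have hr0 : 0 < r := by
    by_contra! hle
    refine hns ⟨0, selfAdjoint_ext fun z => ?_⟩
    have h1 := hnorm z
    have h2 : ‖(φ (axisSymmetry e) : H →L[ℂ] H) z‖ ^ 2 = 0 :=
      le_antisymm (by rw [h1]; exact mul_nonpos_of_nonpos_of_nonneg hle (sq_nonneg _))
        (sq_nonneg _)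
    simpa using h2
  have ha : √r ≠ 0 := (Real.sqrt_pos.mpr hr0).ne'
  have hsq : ∀ z, (φ (axisSymmetry e) : H →L[ℂ] H) ((φ (axisSymmetry e) : H →L[ℂ] H) z) =
      ((√r ^ 2 : ℝ) : ℂ) • z := fun z => by rw [hr, Real.sq_sqrt hr0.le]
  obtain ⟨u, hu1, hu⟩ := exists_unit_eigenvector hsq rfl hns
  obtain ⟨v, hv1, hv⟩ := exists_unit_eigenvector hsq (neg_sq √r) hns
  refine exists_axisSymmetry_of_sq ha hsq hu1 hv1 hu hv ?_
  have key : ∀ B, Anti (φ (axisSymmetry e)) B → ¬ Comm (φ (axisSymmetry e)) B →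
      ∃ x, ⟪e, x⟫_ℂ = 0 ∧ φ (symRank e x) = B ∧ x ≠ 0 := by
    intro B hB hB'
    obtain ⟨B, rfl⟩ := hφ.surj B
    have hnc : ¬ Comm (axisSymmetry e) B := fun h => hB' (hφ.comm_iff.mpr h)
    obtain ⟨h1, h2⟩ := eq_symRank_of_anti_axisSymmetry he ((hφ.anti_iff hnc).mp hB)
    refine ⟨_, h1, congrArg φ h2.symm, fun h0 => hnc ?_⟩
    rw [h2, h0]
    exact fun z => by simp
  intro B C D hB hC hD hB' hC' hD' hBC hBD
  obtain ⟨x, hx, rfl, hx0⟩ := key B hB hB'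
  obtain ⟨y, hy, rfl, -⟩ := key C hC hC'
  obtain ⟨z, hz, rfl, -⟩ := key D hD hD'
  rw [hφ.comm_iff] at hBC hBD ⊢
  exact comm_symRank_trans he hx hy hz hx0 hBC hBD

end QPreserver

/-- The hypothesis that `φ` sends the symmetry attached to `e` to `α` times that attached to `f`. -/
structure AxisImage (φ : Obs H → Obs H) (e : H) (α : ℝ) (f : H) : Prop extends QPreserver φ where
  norm_source : ‖e‖ = 1
  norm_target : ‖f‖ = 1
  ne_zero : α ≠ 0
  map_axisSymmetry : φ (axisSymmetry e) = α • axisSymmetry f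

/-- The action of `φ` on the operators `symRank e x`, transported to vectors. -/
def offDiag (φ : Obs H → Obs H) (e f x : H) : H := (φ (symRank e x) : H →L[ℂ] H) f

namespace AxisImage

variable {φ : Obs H → Obs H} {e f : H} {α : ℝ}

theorem comm_axisSymmetry_iff [Nontrivial H] (hφ : AxisImage φ e α f) {A : Obs H} :
    Comm (φ A) (symRank f f) ↔ Comm A (symRank e e) := by
  rw [← comm_axisSymmetry_right, ← comm_axisSymmetry_right, ← hφ.toQPreserver.comm_iff (A := A),
    hφ.map_axisSymmetry]
  refine ⟨fun h => h.smul_right α, fun h => ?_⟩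
  have := h.smul_right α⁻¹
  rwa [smul_smul, inv_mul_cancel₀ hφ.ne_zero, one_smul] at this

theorem map_symRank_aux [Nontrivial H] (hφ : AxisImage φ e α f) {x : H} (hx : ⟪e, x⟫_ℂ = 0) :
    ⟪f, offDiag φ e f x⟫_ℂ = 0 ∧ φ (symRank e x) = symRank f (offDiag φ e f x) := by
  by_cases hx0 : x = 0
  · have : symRank e x = 0 := selfAdjoint_ext fun z => by simp [hx0]
    have hz : offDiag φ e f x = 0 := by
      simp [offDiag, this, hφ.toQPreserver.map_zero]
    rw [hz, this, hφ.toQPreserver.map_zero]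
    exact ⟨inner_zero_right _, selfAdjoint_ext fun z => by simp⟩
  have hnc : ¬ Comm (axisSymmetry e) (symRank e x) := fun h =>
    hx0 (eq_zero_of_comm_axisSymmetry_symRank hφ.norm_source hx h)
  have ha := (hφ.toQPreserver.anti_iff hnc).mpr (anti_axisSymmetry_symRank hφ.norm_source hx)
  refine eq_symRank_of_anti_axisSymmetry hφ.norm_target fun z => ?_
  have := ha z
  rw [hφ.map_axisSymmetry] at this
  simp only [selfAdjoint_smul_apply, map_smul, ← smul_add] at this
  exact (smul_eq_zero.mp this).resolve_left (Complex.ofReal_ne_zero.mpr hφ.ne_zero)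

theorem inner_offDiag [Nontrivial H] (hφ : AxisImage φ e α f) {x : H} (hx : ⟪e, x⟫_ℂ = 0) :
    ⟪f, offDiag φ e f x⟫_ℂ = 0 := (hφ.map_symRank_aux hx).1

theorem map_symRank [Nontrivial H] (hφ : AxisImage φ e α f) {x : H} (hx : ⟪e, x⟫_ℂ = 0) :
    φ (symRank e x) = symRank f (offDiag φ e f x) := (hφ.map_symRank_aux hx).2

theorem offDiag_add (hφ : AxisImage φ e α f) (x y : H) :
    offDiag φ e f (x + y) = offDiag φ e f x + offDiag φ e f y := by
  simp [offDiag, symRank_add_right, hφ.map_add]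

theorem offDiag_sub (hφ : AxisImage φ e α f) (x y : H) :
    offDiag φ e f (x - y) = offDiag φ e f x - offDiag φ e f y := by
  rw [eq_sub_iff_add_eq, ← hφ.offDiag_add, sub_add_cancel]

theorem offDiag_zero (hφ : AxisImage φ e α f) : offDiag φ e f 0 = 0 := by
  simpa using hφ.offDiag_add 0 0

theorem comm_symRank_offDiag [Nontrivial H] (hφ : AxisImage φ e α f) {x y : H} (hx : ⟪e, x⟫_ℂ = 0)
    (hy : ⟪e, y⟫_ℂ = 0) : Comm (symRank f (offDiag φ e f x)) (symRank f (offDiag φ e f y)) ↔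
      Comm (symRank e x) (symRank e y) := by
  rw [← hφ.map_symRank hx, ← hφ.map_symRank hy, hφ.toQPreserver.comm_iff]

theorem offDiag_ne_zero [Nontrivial H] (hφ : AxisImage φ e α f) {x : H} (hx : ⟪e, x⟫_ℂ = 0)
    (hx0 : x ≠ 0) : offDiag φ e f x ≠ 0 := fun h => by
  refine hx0 (eq_zero_of_comm_axisSymmetry_symRank hφ.norm_source hx
    (hφ.toQPreserver.comm_iff.mp ?_))
  rw [hφ.map_symRank hx, h]
  exact fun z => by simp

theorem exists_offDiag_smul [Nontrivial H] (hφ : AxisImage φ e α f) {x : H} (hx : ⟪e, x⟫_ℂ = 0)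
    (hx0 : x ≠ 0) (t : ℝ) :
    ∃ s : ℝ, offDiag φ e f ((t : ℂ) • x) = (s : ℂ) • offDiag φ e f x := by
  have htx : ⟪e, (t : ℂ) • x⟫_ℂ = 0 := by rw [inner_smul_right, hx, mul_zero]
  refine exists_real_smul_of_comm_symRank hφ.norm_target (hφ.inner_offDiag hx)
    (hφ.inner_offDiag htx) (hφ.offDiag_ne_zero hx hx0) ((hφ.comm_symRank_offDiag hx htx).mpr ?_)
  rw [symRank_smul_right]
  exact Comm.smul_right (fun _ => rfl) t

theorem offDiag_linearIndependent [Nontrivial H] (hφ : AxisImage φ e α f) {x y : H}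
    (hx : ⟪e, x⟫_ℂ = 0) (hy : ⟪e, y⟫_ℂ = 0) (hx0 : x ≠ 0) (hxy : ∀ r : ℝ, y ≠ (r : ℂ) • x)
    {a b : ℝ} (h : (a : ℂ) • offDiag φ e f x + (b : ℂ) • offDiag φ e f y = 0) :
    a = 0 ∧ b = 0 := by
  have hb : b = 0 := by
    by_contra hb
    have hb' : (b : ℂ) ≠ 0 := Complex.ofReal_ne_zero.mpr hb
    have h1 : offDiag φ e f y = ((-(b⁻¹ * a) : ℝ) : ℂ) • offDiag φ e f x := by
      apply smul_right_injective H hb'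
      simp only [smul_smul]
      rw [eq_neg_of_add_eq_zero_right h, ← neg_smul]
      congr 1
      push_cast
      field_simp
    obtain ⟨t, ht⟩ := exists_real_smul_of_comm_symRank hφ.norm_source hx hy hx0
      ((hφ.comm_symRank_offDiag hx hy).mp (by
        rw [h1, symRank_smul_right]
        exact Comm.smul_right (fun _ => rfl) _))
    exact hxy t ht
  refine ⟨?_, hb⟩
  rw [hb, Complex.ofReal_zero, zero_smul, add_zero, smul_eq_zero] at h
  simpa [hφ.offDiag_ne_zero hx hx0] using h

theorem offDiag_smul_of_independent [Nontrivial H] (hφ : AxisImage φ e α f) {x y : H}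
    (hx : ⟪e, x⟫_ℂ = 0) (hy : ⟪e, y⟫_ℂ = 0) (hx0 : x ≠ 0) (hxy : ∀ r : ℝ, y ≠ (r : ℂ) • x)
    {t s : ℝ} (h : offDiag φ e f ((t : ℂ) • x) = (s : ℂ) • offDiag φ e f x) :
    offDiag φ e f ((t : ℂ) • y) = (s : ℂ) • offDiag φ e f y := by
  have hy0 : y ≠ 0 := by simpa using hxy 0
  have hxy0 : x + y ≠ 0 := fun h0 => hxy (-1) (by rw [eq_neg_of_add_eq_zero_right h0]; simp)
  obtain ⟨s₁, h1⟩ := hφ.exists_offDiag_smul hy hy0 t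
  obtain ⟨s₂, h2⟩ := hφ.exists_offDiag_smul (x := x + y) (by rw [inner_add_right, hx, hy, add_zero])
    hxy0 t
  rw [smul_add, hφ.offDiag_add, hφ.offDiag_add, h, h1, ← sub_eq_zero] at h2
  obtain ⟨h3, h4⟩ := hφ.offDiag_linearIndependent hx hy hx0 hxy (a := s - s₂) (b := s₁ - s₂) (by
    rw [← h2]; push_cast; module)
  rw [h1, show s₁ = s by linarith]

theorem offDiag_real_smul [Nontrivial H] (hφ : AxisImage φ e α f) {x : H} (hx : ⟪e, x⟫_ℂ = 0)
    (t : ℝ) : offDiag φ e f ((t : ℂ) • x) = (t : ℂ) • offDiag φ e f x := by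
  by_cases hx0 : x = 0
  · simp [hx0, hφ.offDiag_zero]
  have hg0 := hφ.offDiag_ne_zero hx hx0
  choose τ hτ using hφ.exists_offDiag_smul hx hx0
  have hix : ⟪e, Complex.I • x⟫_ℂ = 0 := by rw [inner_smul_right, hx, mul_zero]
  have hinj : ∀ a b : ℝ, (a : ℂ) • offDiag φ e f x = (b : ℂ) • offDiag φ e f x → a = b :=
    fun a b h => Complex.ofReal_injective (smul_left_injective ℂ hg0 h)
  have h1 : ∀ t u : ℝ, u ≠ 0 → offDiag φ e f ((t : ℂ) • (u : ℂ) • x) =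
      (τ t : ℂ) • offDiag φ e f ((u : ℂ) • x) := fun t u hu => by
    refine hφ.offDiag_smul_of_independent hix (by rw [inner_smul_right, hx, mul_zero])
      (smul_ne_zero Complex.I_ne_zero hx0) (fun r hr => ?_)
      (hφ.offDiag_smul_of_independent hx hix hx0 (fun r hr => ?_) (hτ t))
    · rw [smul_smul] at hr
      have := congrArg Complex.re (smul_left_injective ℂ hx0 hr)
      simp [hu] at this
    · have := congrArg Complex.im (smul_left_injective ℂ hx0 hr)
      simp at this
  let T : ℝ →+* ℝ :=
    { toFun := τ
      map_one' := hinj _ _ (by rw [← hτ]; simp)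
      map_zero' := hinj _ _ (by rw [← hτ]; simp [hφ.offDiag_zero])
      map_add' := fun a b => hinj _ _ (by
        rw [← hτ]; push_cast; rw [add_smul, hφ.offDiag_add, hτ, hτ, add_smul])
      map_mul' := fun a b => by
        by_cases hb : b = 0
        · have : τ 0 = 0 := hinj _ _ (by rw [← hτ]; simp [hφ.offDiag_zero])
          simp [hb, this]
        · refine hinj _ _ ?_
          rw [← hτ]; push_cast; rw [mul_smul, h1 a b hb, hτ, smul_smul] }
  have : T = RingHom.id ℝ := Subsingleton.elim _ _
  rw [hτ, show τ t = t from congrArg (fun S : ℝ →+* ℝ => S t) this]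

end AxisImage

namespace QPreserver

variable {φ : Obs H → Obs H}

theorem exists_axisImage [Nontrivial H] (hφ : QPreserver φ) (hdim : 3 ≤ Module.rank ℂ H) {e : H}
    (he : ‖e‖ = 1) : ∃ (α : ℝ) (f : H), AxisImage φ e α f := by
  obtain ⟨α, f, hα, hf, h⟩ := hφ.exists_axisSymmetry hdim he
  exact ⟨α, f, hφ, he, hf, hα, h⟩

/-- `φ` is real-homogeneous up to scalar operators. -/
theorem exists_map_smul [Nontrivial H] (hφ : QPreserver φ) (hdim : 3 ≤ Module.rank ℂ H) (t : ℝ)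
    (A : Obs H) : IsScalarOp (φ (t • A) - t • φ A) := by
  obtain ⟨D, hD⟩ := hφ.surj (φ (t • A) - t • φ A)
  rw [← hD, hφ.isScalarOp_iff]
  refine isScalarOp_of_comm_symRank fun x hx => ?_
  obtain ⟨α, f, hf⟩ := hφ.exists_axisImage hdim hx
  rw [← hf.comm_axisSymmetry_iff, hD]
  obtain ⟨C, r, w, hxw, rfl, hC, -, -⟩ := exists_add_symRank A hx
  have h1 : φ (t • (C + symRank x w)) - t • φ (C + symRank x w) = φ (t • C) - t • φ C := by
    rw [smul_add, hφ.map_add, hφ.map_add, ← symRank_smul_right, hf.map_symRank hxw,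
      hf.map_symRank (by rw [inner_smul_right, hxw, mul_zero]), hf.offDiag_real_smul hxw,
      symRank_smul_right, smul_add]
    abel
  rw [h1]
  exact ((hf.comm_axisSymmetry_iff.mpr (hC.symm.smul_right t).symm).symm.sub_right
    ((hf.comm_axisSymmetry_iff.mpr hC).symm.smul_right t)).symm

end QPreserver

/-- Equality of self-adjoint operators up to a real scalar operator. -/
def ScalarEq (A B : Obs H) : Prop := ∃ s : ℝ, A = B + s • (1 : Obs H)

namespace ScalarEq

variable {A B C D : Obs H}

theorem refl (A : Obs H) : ScalarEq A A := ⟨0, by rw [zero_smul, add_zero]⟩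

theorem symm (h : ScalarEq A B) : ScalarEq B A := by
  obtain ⟨s, rfl⟩ := h
  exact ⟨-s, by rw [neg_smul, add_neg_cancel_right]⟩

theorem trans (h : ScalarEq A B) (h' : ScalarEq B C) : ScalarEq A C := by
  obtain ⟨s, rfl⟩ := h
  obtain ⟨t, rfl⟩ := h'
  exact ⟨t + s, by rw [add_smul, add_assoc]⟩

theorem add (h : ScalarEq A B) (h' : ScalarEq C D) : ScalarEq (A + C) (B + D) := by
  obtain ⟨s, rfl⟩ := h
  obtain ⟨t, rfl⟩ := h'
  exact ⟨s + t, by rw [add_smul]; abel⟩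

theorem smul (h : ScalarEq A B) (t : ℝ) : ScalarEq (t • A) (t • B) := by
  obtain ⟨s, rfl⟩ := h
  exact ⟨t * s, by rw [smul_add, mul_smul]⟩

theorem sub (h : ScalarEq A B) (h' : ScalarEq C D) : ScalarEq (A - C) (B - D) := by
  obtain ⟨s, rfl⟩ := h
  obtain ⟨t, rfl⟩ := h'
  exact ⟨s - t, by rw [sub_smul]; abel⟩

theorem of_smul {t : ℝ} (ht : t ≠ 0) (h : ScalarEq (t • A) (t • B)) : ScalarEq A B := by
  have := h.smul t⁻¹
  rwa [smul_smul, smul_smul, inv_mul_cancel₀ ht, one_smul, one_smul] at this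

theorem comm_left (h : ScalarEq A B) (hc : Comm A C) : Comm B C := fun z => by
  obtain ⟨s, rfl⟩ := h
  simpa using hc z

theorem comm_right (h : ScalarEq A B) (hc : Comm C A) : Comm C B :=
  (h.comm_left hc.symm).symm

end ScalarEq

theorem symRank_zero_right (x : H) : symRank x 0 = 0 := selfAdjoint_ext fun z => by simp

theorem symRank_add_self (x y : H) :
    symRank (x + y) (x + y) = symRank x x + symRank y y + (2 : ℝ) • symRank x y := by
  rw [symRank_add_left, symRank_add_right, symRank_add_right, symRank_comm y x, two_smul]
  abel

theorem QPreserver.scalarEq_map_smul [Nontrivial H] {φ : Obs H → Obs H} (hφ : QPreserver φ)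
    (hdim : 3 ≤ Module.rank ℂ H) (t : ℝ) (A : Obs H) : ScalarEq (φ (t • A)) (t • φ A) := by
  obtain ⟨s, hs⟩ := hφ.exists_map_smul hdim t A
  exact ⟨s, by rw [← hs]; abel⟩

namespace AxisImage

variable {φ : Obs H → Obs H} {e f : H} {α : ℝ}

theorem map_symRank_self [Nontrivial H] (hφ : AxisImage φ e α f) :
    ScalarEq (φ (symRank e e)) (α • symRank f f) := by
  obtain ⟨k, hk⟩ := hφ.toQPreserver.isScalarOp_iff.mpr ⟨1, (one_smul ℝ (1 : Obs H)).symm⟩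
  refine ⟨k - α, ?_⟩
  have h : φ (symRank e e) = φ (axisSymmetry e) + φ 1 := by
    rw [← hφ.map_add, axisSymmetry, sub_add_cancel]
  rw [h, hφ.map_axisSymmetry, hk, axisSymmetry, smul_sub, sub_smul]
  abel

theorem exists_target_orthogonal [Nontrivial H] (hφ : AxisImage φ e α f)
    (hdim : 3 ≤ Module.rank ℂ H) {y : H} (hy1 : ‖y‖ = 1) (hy : ⟪e, y⟫_ℂ = 0) :
    ∃ (h : H) (c : ℂ), AxisImage φ y α h ∧ ⟪f, h⟫_ℂ = 0 ∧ offDiag φ e f y = c • h := by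
  obtain ⟨β, h, hh⟩ := hφ.toQPreserver.exists_axisImage hdim hy1
  have hfg : ⟪f, offDiag φ e f y⟫_ℂ = 0 := hφ.inner_offDiag hy
  have hy0 : y ≠ 0 := norm_ne_zero_iff.mp (by rw [hy1]; exact one_ne_zero)
  have hg0 : offDiag φ e f y ≠ 0 := hφ.offDiag_ne_zero hy hy0
  have he1 := inner_self_of_unit hφ.norm_source
  have hf1 := inner_self_of_unit hφ.norm_target
  have hc : Comm (symRank e e + symRank y y) (symRank e y) := fun z => by
    simp only [selfAdjoint_add_apply, symRank_apply, inner_add_right, inner_smul_right, hy, he1,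
      inner_eq_zero_symm.mp hy, inner_self_of_unit hy1]
    module
  rw [← hφ.toQPreserver.comm_iff, hφ.map_symRank hy, hφ.map_add] at hc
  generalize offDiag φ e f y = g at hc hfg hg0 ⊢
  have hcomm' := (hφ.map_symRank_self.add hh.map_symRank_self).comm_left hc
  have hortho : ⟪f, h⟫_ℂ = 0 := by
    by_contra hne
    have hcomm : Comm (symRank e e) (symRank y y) := comm_symRank_self_of_eigenvector (r := 0) (by
      simp [hy])
    have hev := hφ.map_symRank_self.comm_left (hh.comm_axisSymmetry_iff.mpr hcomm) f
    simp only [selfAdjoint_smul_apply, symRank_apply, map_add, map_smul, hf1] at hev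
    have hhf : h = ⟪f, h⟫_ℂ • f := by
      have hne' : ⟪h, f⟫_ℂ ≠ 0 := fun h0 => hne (inner_eq_zero_symm.mp h0)
      have h4 : 4 * (α * ⟪h, f⟫_ℂ) ≠ 0 := by simp [hφ.ne_zero, hne']
      apply smul_right_injective H h4
      rw [← sub_eq_zero, ← neg_eq_zero, ← sub_eq_zero.mpr hev]
      module
    have hk : ‖⟪f, h⟫_ℂ‖ = 1 := by
      have := congrArg norm hhf
      rwa [norm_smul, hφ.norm_target, hh.norm_target, mul_one, eq_comm] at this
    have hp : symRank h h = symRank f f := by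
      rw [hhf, symRank_smul_smul_self, hk, one_pow, one_smul]
    rw [hp, ← add_smul] at hcomm'
    have hsum : α + β = 0 := by
      by_contra h0
      refine hg0 (eq_zero_of_comm_axisSymmetry_symRank hφ.norm_target hfg
        (comm_axisSymmetry_right.mpr ?_).symm)
      have := hcomm'.symm.smul_right (α + β)⁻¹
      rwa [smul_smul, inv_mul_cancel₀ h0, one_smul] at this
    have hscal : IsScalarOp (φ (symRank e e + symRank y y)) := by
      obtain ⟨s, hs⟩ := hφ.map_symRank_self.add hh.map_symRank_self
      refine ⟨s, ?_⟩
      rw [hφ.map_add, hs, hp, ← add_smul, hsum, zero_smul, zero_add]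
    obtain ⟨r, hr⟩ := hφ.toQPreserver.isScalarOp_iff.mp hscal
    obtain ⟨z, hz1, hez, hyz⟩ := exists_unit_orthogonal hdim e y
    have hz0 : z ≠ 0 := norm_ne_zero_iff.mp (by rw [hz1]; exact one_ne_zero)
    have he0 : e ≠ 0 := norm_ne_zero_iff.mp (by rw [hφ.norm_source]; exact one_ne_zero)
    have h1 := congrArg (fun A : Obs H => (A : H →L[ℂ] H) z) hr
    have h2 := congrArg (fun A : Obs H => (A : H →L[ℂ] H) e) hr
    have hr0 : r = 0 := by simpa [hez, hyz, hz0, -Complex.coe_smul] using h1.symm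
    have h3 : (2 : ℂ) • e = 0 := by
      simpa [hr0, hφ.norm_source, inner_eq_zero_symm.mp hy, two_smul] using h2
    simp [he0] at h3
  have key := hcomm' f
  simp only [selfAdjoint_add_apply, selfAdjoint_smul_apply, symRank_apply, inner_add_right,
    inner_smul_right, hfg, inner_eq_zero_symm.mp hfg, hf1, hortho,
    inner_eq_zero_symm.mp hortho] at key
  have key' : (α : ℂ) • g = (β : ℂ) • ⟪h, g⟫_ℂ • h := by
    apply smul_right_injective H (two_ne_zero (α := ℂ))
    rw [← sub_eq_zero, ← neg_eq_zero, ← sub_eq_zero.mpr key]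
    module
  have hin := congrArg (fun v => ⟪h, v⟫_ℂ) key'
  simp only [inner_smul_right, inner_self_of_unit hh.norm_target, mul_one] at hin
  have hhg : ⟪h, g⟫_ℂ ≠ 0 := fun h0 => hg0 (by
    rw [h0, zero_smul, smul_zero] at key'
    exact (smul_eq_zero.mp key').resolve_left (Complex.ofReal_ne_zero.mpr hφ.ne_zero))
  have hαβ : α = β := Complex.ofReal_injective (mul_right_cancel₀ hhg hin)
  subst hαβ
  exact ⟨h, _, hh, hortho,
    smul_right_injective H (Complex.ofReal_ne_zero.mpr hφ.ne_zero) key'⟩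

end AxisImage
theorem exists_unit_eq_smul {E : Type*} [NormedAddCommGroup E] [InnerProductSpace ℂ E]
    {x : E} (hx : x ≠ 0) :
    ∃ u : E, ‖u‖ = 1 ∧ x = ((‖x‖ : ℝ) : ℂ) • u := by
  have h0 : ((‖x‖ : ℝ) : ℂ) ≠ 0 := by simpa using hx
  exact ⟨((‖x‖ : ℝ) : ℂ)⁻¹ • x, by
    rw [norm_smul, norm_inv, Complex.norm_real, norm_norm,
      inv_mul_cancel₀ (norm_ne_zero_iff.mpr hx)],
    by rw [smul_inv_smul₀ h0]⟩

theorem symRank_smul_self (t : ℝ) (x : H) :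
    symRank ((t : ℂ) • x) ((t : ℂ) • x) = t ^ 2 • symRank x x := by
  rw [symRank_smul_smul_self, Complex.norm_real, Real.norm_eq_abs, sq_abs]

namespace AxisImage

variable {φ : Obs H → Obs H} {e f : H} {α : ℝ}

theorem inner_eq_zero_of_eq_smul {E : Type*} [NormedAddCommGroup E] [InnerProductSpace ℂ E]
    {x u : E} {t : ℝ} (hx0 : x ≠ 0)
    (hxu : x = (t : ℂ) • u) {z : E} (h : ⟪z, x⟫_ℂ = 0) : ⟪z, u⟫_ℂ = 0 := by
  have ht : (t : ℂ) ≠ 0 := fun h0 => hx0 (by rw [hxu, h0, zero_smul])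
  rw [hxu, inner_smul_right] at h
  exact (mul_eq_zero.mp h).resolve_left ht

theorem inner_offDiag_offDiag [Nontrivial H] (hφ : AxisImage φ e α f)
    (hdim : 3 ≤ Module.rank ℂ H) {x y : H} (hx : ⟪e, x⟫_ℂ = 0) (hy : ⟪e, y⟫_ℂ = 0)
    (hxy : ⟪x, y⟫_ℂ = 0) : ⟪offDiag φ e f x, offDiag φ e f y⟫_ℂ = 0 := by
  by_cases hy0 : y = 0
  · rw [hy0, hφ.offDiag_zero, inner_zero_right]
  obtain ⟨u, hu1, hyu⟩ := exists_unit_eq_smul hy0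
  have hu := inner_eq_zero_of_eq_smul hy0 hyu hy
  have hxu := inner_eq_zero_of_eq_smul hy0 hyu hxy
  obtain ⟨h, c, hh, hfh, hc⟩ := hφ.exists_target_orthogonal hdim hu1 hu
  have hcomm : Comm (symRank e x) (symRank u u) :=
    (comm_symRank_self_of_eigenvector (r := 0) (by simp [hu, hxu]))
  have hev := (hh.comm_axisSymmetry_iff.mpr hcomm).eigenvector hh.norm_target
  rw [hφ.map_symRank hx, symRank_apply, hfh, zero_smul, add_zero, inner_smul_right,
    inner_eq_zero_symm.mp hfh, mul_zero, zero_smul, smul_eq_zero] at hev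
  have hf0 : f ≠ 0 := norm_ne_zero_iff.mp (by rw [hφ.norm_target]; exact one_ne_zero)
  rw [hyu, hφ.offDiag_real_smul hu, hc, inner_smul_right, inner_smul_right,
    hev.resolve_right hf0, mul_zero, mul_zero]

theorem inner_add_sub_eq_zero_iff {E : Type*} [NormedAddCommGroup E] [InnerProductSpace ℂ E]
    {x y : E} (hxy : ⟪x, y⟫_ℂ = 0) :
    ⟪x + y, x - y⟫_ℂ = 0 ↔ ‖x‖ = ‖y‖ := by
  rw [inner_add_left, inner_sub_right, inner_sub_right, hxy, inner_eq_zero_symm.mp hxy,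
    inner_self_eq_ofReal, inner_self_eq_ofReal, sub_zero, zero_sub, ← sub_eq_add_neg, sub_eq_zero,
    Complex.ofReal_inj, sq_eq_sq₀ (norm_nonneg _) (norm_nonneg _)]

theorem norm_offDiag_eq_of_orthogonal [Nontrivial H] (hφ : AxisImage φ e α f)
    (hdim : 3 ≤ Module.rank ℂ H) {x y : H} (hx : ⟪e, x⟫_ℂ = 0) (hy : ⟪e, y⟫_ℂ = 0)
    (hxy : ⟪x, y⟫_ℂ = 0) (hn : ‖x‖ = ‖y‖) : ‖offDiag φ e f x‖ = ‖offDiag φ e f y‖ := by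
  rw [← inner_add_sub_eq_zero_iff (hφ.inner_offDiag_offDiag hdim hx hy hxy), ← hφ.offDiag_add,
    ← hφ.offDiag_sub]
  exact hφ.inner_offDiag_offDiag hdim (by rw [inner_add_right, hx, hy, add_zero])
    (by rw [inner_sub_right, hx, hy, sub_zero]) ((inner_add_sub_eq_zero_iff hxy).mpr hn)

theorem scalarEq_smul_map_symRank_self [Nontrivial H] (hφ : AxisImage φ e α f)
    (hdim : 3 ≤ Module.rank ℂ H) {y : H} (hy : ⟪e, y⟫_ℂ = 0) :
    ScalarEq (‖offDiag φ e f y‖ ^ 2 • φ (symRank y y))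
      ((α * ‖y‖ ^ 2) • symRank (offDiag φ e f y) (offDiag φ e f y)) := by
  by_cases hy0 : y = 0
  · rw [hy0, hφ.offDiag_zero, symRank_zero_right, hφ.toQPreserver.map_zero, smul_zero, smul_zero]
    exact ScalarEq.refl _
  obtain ⟨u, hu1, hyu⟩ := exists_unit_eq_smul hy0
  have hu := inner_eq_zero_of_eq_smul hy0 hyu hy
  obtain ⟨h, c, hh, hfh, hc⟩ := hφ.exists_target_orthogonal hdim hu1 hu
  generalize ‖y‖ = t at hyu ⊢
  subst hyu
  rw [hφ.offDiag_real_smul hu, symRank_smul_self, symRank_smul_self, hc, symRank_smul_smul_self,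
    norm_smul, norm_smul, hh.norm_target, Complex.norm_real, Real.norm_eq_abs, mul_one, mul_pow,
    sq_abs]
  have := ((hφ.toQPreserver.scalarEq_map_smul hdim (t ^ 2) (symRank u u)).trans
    (hh.map_symRank_self.smul _)).smul (t ^ 2 * ‖c‖ ^ 2)
  refine this.trans ?_
  simp only [smul_smul]
  rw [show t ^ 2 * ‖c‖ ^ 2 * (t ^ 2 * α) = α * t ^ 2 * (t ^ 2 * ‖c‖ ^ 2) by ring]
  exact ScalarEq.refl _

theorem norm_offDiag_of_unit [Nontrivial H] (hφ : AxisImage φ e α f)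
    (hdim : 3 ≤ Module.rank ℂ H) {x : H} (hx : ⟪e, x⟫_ℂ = 0) (hx1 : ‖x‖ = 1) :
    ‖offDiag φ e f x‖ = |α| := by
  obtain ⟨y, hy1, hy, hxy⟩ := exists_unit_orthogonal hdim e x
  have hsum : ⟪e, x + y⟫_ℂ = 0 := by rw [inner_add_right, hx, hy, add_zero]
  have hx0 : x ≠ 0 := norm_ne_zero_iff.mp (by rw [hx1]; exact one_ne_zero)
  have hpx := hφ.scalarEq_smul_map_symRank_self hdim hx
  have hpy := hφ.scalarEq_smul_map_symRank_self hdim hy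
  have hpxy := hφ.scalarEq_smul_map_symRank_self hdim hsum
  have hgn := hφ.norm_offDiag_eq_of_orthogonal hdim hx hy hxy (hx1.trans hy1.symm)
  have hgxy := hφ.inner_offDiag_offDiag hdim hx hy hxy
  have hgx0 := hφ.offDiag_ne_zero hx hx0
  have hfx := hφ.inner_offDiag hx
  have hfy := hφ.inner_offDiag hy
  have hmx := hφ.map_symRank hx
  have hmy := hφ.map_symRank hy
  rw [hφ.offDiag_add] at hpxy
  have hsq : ∀ u v : H, ⟪u, v⟫_ℂ = 0 → ‖u‖ = ‖v‖ → ‖u + v‖ ^ 2 = 2 * ‖u‖ ^ 2 := by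
    intro u v h0 hn
    have h1 := inner_self_eq_ofReal (u + v)
    rw [inner_add_left, inner_add_right, inner_add_right, h0, inner_eq_zero_symm.mp h0,
      inner_self_eq_ofReal, inner_self_eq_ofReal, ← hn] at h1
    rw [add_zero, zero_add, ← Complex.ofReal_add, Complex.ofReal_inj] at h1
    linarith
  rw [hsq _ _ hgxy hgn, hsq _ _ hxy (hx1.trans hy1.symm)] at hpxy
  rw [← hgn] at hpy
  have hm2 : ⟪offDiag φ e f x, offDiag φ e f x⟫_ℂ = (‖offDiag φ e f x‖ ^ 2 : ℝ) :=
    inner_self_eq_ofReal _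
  have hm2' : ⟪offDiag φ e f y, offDiag φ e f y⟫_ℂ = (‖offDiag φ e f x‖ ^ 2 : ℝ) := by
    rw [hgn]; exact inner_self_eq_ofReal _
  have hm0 : ‖offDiag φ e f x‖ ≠ 0 := norm_ne_zero_iff.mpr hgx0
  have hf1 := inner_self_of_unit hφ.norm_target
  rw [hx1] at hpx hpxy
  rw [hy1] at hpy
  generalize offDiag φ e f x = X at *
  generalize offDiag φ e f y = Y at *
  have hmnn := norm_nonneg X
  generalize ‖X‖ = m at *
  have hB : ScalarEq (m ^ 2 • φ (symRank x y)) (α • symRank X Y) := by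
    apply ScalarEq.of_smul (t := 4) (by norm_num)
    convert (hpxy.sub (hpx.smul 2)).sub (hpy.smul 2) using 1
    · rw [symRank_add_self, hφ.map_add, hφ.map_add, two_smul, hφ.map_add]
      module
    · rw [symRank_add_self]
      module
  have hM : ScalarEq (m ^ 2 • φ (symRank (e + x) (e + x)))
      (m ^ 2 • (α • symRank f f + (2 : ℝ) • symRank f X) + α • symRank X X) := by
    convert ((hφ.map_symRank_self.add (ScalarEq.refl ((2 : ℝ) • symRank f X))).smul (m ^ 2)).add hpx
      using 1
    · rw [symRank_add_self, hφ.map_add, hφ.map_add, two_smul, hφ.map_add, hmx]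
      module
    · module
  have hcomm : Comm (symRank (e + x) (e + x)) (symRank e y - symRank x y) := fun z => by
    simp only [selfAdjoint_sub_apply, symRank_apply, inner_add_left, inner_add_right,
      inner_sub_right, inner_smul_right, hx, hy, hxy, inner_eq_zero_symm.mp hx,
      inner_eq_zero_symm.mp hy, inner_eq_zero_symm.mp hxy, inner_self_of_unit hφ.norm_source,
      inner_self_of_unit hx1]
    module
  have hcomm' : Comm (m ^ 2 • (α • symRank f f + (2 : ℝ) • symRank f X) + α • symRank X X)
      (m ^ 2 • symRank f Y - α • symRank X Y) := by
    refine hM.comm_left (((ScalarEq.refl (m ^ 2 • symRank f Y)).sub hB).comm_right ?_)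
    rw [← smul_sub, ← hmy, ← hφ.toQPreserver.map_sub]
    exact ((hφ.toQPreserver.comm_iff.mpr hcomm).smul_right _).symm.smul_right _ |>.symm
  have key := hcomm' Y
  simp only [selfAdjoint_sub_apply, selfAdjoint_add_apply, selfAdjoint_smul_apply, symRank_apply,
    inner_sub_right, inner_add_right, inner_smul_right, hgxy, hfx, hfy, hf1, hm2, hm2',
    inner_eq_zero_symm.mp hgxy, inner_eq_zero_symm.mp hfx, inner_eq_zero_symm.mp hfy] at key
  have h3 : ((2 * m ^ 4 * (m ^ 2 - α ^ 2) : ℝ) : ℂ) • X = 0 := by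
    rw [← sub_eq_zero] at key
    rw [← key]
    push_cast
    module
  have h4 : m ^ 2 = α ^ 2 := by
    have := Complex.ofReal_eq_zero.mp ((smul_eq_zero.mp h3).resolve_right hgx0)
    have h5 : 2 * m ^ 4 ≠ 0 := by positivity
    exact sub_eq_zero.mp ((mul_eq_zero.mp this).resolve_left h5)
  rw [← abs_of_nonneg hmnn]
  exact sq_eq_sq_iff_abs_eq_abs _ _ |>.mp h4

theorem norm_offDiag [Nontrivial H] (hφ : AxisImage φ e α f)
    (hdim : 3 ≤ Module.rank ℂ H) {x : H} (hx : ⟪e, x⟫_ℂ = 0) :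
    ‖offDiag φ e f x‖ = |α| * ‖x‖ := by
  by_cases hx0 : x = 0
  · rw [hx0, hφ.offDiag_zero, norm_zero, mul_zero]
  obtain ⟨u, hu1, hxu⟩ := exists_unit_eq_smul hx0
  have hu := inner_eq_zero_of_eq_smul hx0 hxu hx
  have ht := norm_nonneg x
  generalize ‖x‖ = t at hxu ht ⊢
  subst hxu
  rw [hφ.offDiag_real_smul hu, norm_smul, hφ.norm_offDiag_of_unit hdim hu hu1, Complex.norm_real,
    Real.norm_eq_abs, abs_of_nonneg ht, mul_comm]

theorem scalarEq_map_symRank_self [Nontrivial H] (hφ : AxisImage φ e α f)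
    (hdim : 3 ≤ Module.rank ℂ H) {y : H} (hy : ⟪e, y⟫_ℂ = 0) :
    ScalarEq (φ (symRank y y)) (α⁻¹ • symRank (offDiag φ e f y) (offDiag φ e f y)) := by
  by_cases hy0 : y = 0
  · rw [hy0, hφ.offDiag_zero, symRank_zero_right, hφ.toQPreserver.map_zero, smul_zero]
    exact ScalarEq.refl _
  have h := hφ.scalarEq_smul_map_symRank_self hdim hy
  have h0 : ‖offDiag φ e f y‖ ^ 2 ≠ 0 := by simpa using hφ.offDiag_ne_zero hy hy0
  refine ScalarEq.of_smul h0 (h.trans ?_)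
  have hα := hφ.ne_zero
  rw [smul_smul, hφ.norm_offDiag hdim hy, mul_pow, sq_abs,
    show α ^ 2 * ‖y‖ ^ 2 * α⁻¹ = α * ‖y‖ ^ 2 by field_simp]
  exact ScalarEq.refl _

end AxisImage
namespace AxisImage

variable {φ : Obs H → Obs H} {e f : H} {α : ℝ}

theorem offDiag_I_smul [Nontrivial H] (hφ : AxisImage φ e α f) (hdim : 3 ≤ Module.rank ℂ H)
    {x : H} (hx : ⟪e, x⟫_ℂ = 0) :
    offDiag φ e f (Complex.I • x) = Complex.I • offDiag φ e f x ∨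
      offDiag φ e f (Complex.I • x) = -Complex.I • offDiag φ e f x := by
  by_cases hx0 : x = 0
  · simp [hx0, hφ.offDiag_zero]
  have hix : ⟪e, Complex.I • x⟫_ℂ = 0 := by rw [inner_smul_right, hx, mul_zero]
  have hnc : ¬ Comm (symRank e x) (symRank e (Complex.I • x)) := fun h => by
    obtain ⟨t, ht⟩ := exists_real_smul_of_comm_symRank hφ.norm_source hx hix hx0 h
    have := congrArg Complex.im (smul_left_injective ℂ hx0 ht)
    simp at this
  have hanti : Anti (symRank e x) (symRank e (Complex.I • x)) := fun z => by
    simp only [symRank_apply, inner_add_right, inner_smul_right, inner_smul_left, hx,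
      inner_eq_zero_symm.mp hx, inner_self_of_unit hφ.norm_source, Complex.conj_I]
    module
  rw [← hφ.toQPreserver.anti_iff hnc, hφ.map_symRank hx, hφ.map_symRank hix] at hanti
  have hnorm : ‖offDiag φ e f (Complex.I • x)‖ = ‖offDiag φ e f x‖ := by
    rw [hφ.norm_offDiag hdim hx, hφ.norm_offDiag hdim hix, norm_smul, Complex.norm_I, one_mul]
  have hX0 := hφ.offDiag_ne_zero hx hx0
  have hfX := hφ.inner_offDiag hx
  have hfY := hφ.inner_offDiag hix
  have hf1 := inner_self_of_unit hφ.norm_target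
  generalize offDiag φ e f (Complex.I • x) = Y at *
  generalize offDiag φ e f x = X at *
  have hXX : ⟪X, X⟫_ℂ ≠ 0 := inner_self_ne_zero.mpr hX0
  have h1 := hanti X
  have h2 := hanti f
  simp only [symRank_apply, inner_add_right, inner_smul_right, hfX, hfY, hf1,
    inner_eq_zero_symm.mp hfX, inner_eq_zero_symm.mp hfY] at h1 h2
  obtain ⟨k, rfl⟩ : ∃ k : ℂ, Y = k • X := by
    refine ⟨-(⟪Y, X⟫_ℂ / ⟪X, X⟫_ℂ), smul_right_injective H hXX ?_⟩
    simp only [smul_smul]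
    rw [show ⟪X, X⟫_ℂ * -(⟪Y, X⟫_ℂ / ⟪X, X⟫_ℂ) = -⟪Y, X⟫_ℂ by field_simp, ← sub_eq_zero, ← h1]
    module
  have hk1 : ‖k‖ = 1 := by
    rw [norm_smul] at hnorm
    exact mul_right_cancel₀ (norm_ne_zero_iff.mpr hX0) (hnorm.trans (one_mul _).symm)
  have hf0 : f ≠ 0 := norm_ne_zero_iff.mp (by rw [hφ.norm_target]; exact one_ne_zero)
  have hk2 : k + conj k = 0 := by
    have h3 : ((k + conj k) * ⟪X, X⟫_ℂ) • f = 0 := by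
      rw [← h2]
      simp only [inner_smul_left, inner_smul_right]
      module
    simpa [hf0, hX0] using h3
  have hk3 : k ^ 2 = Complex.I ^ 2 := by
    have h4 := Complex.mul_conj' k
    rw [hk1, eq_neg_of_add_eq_zero_right hk2] at h4
    rw [Complex.I_sq]
    linear_combination -h4 - (by simp : ((1 : ℝ) : ℂ) ^ 2 = 1)
  rcases sq_eq_sq_iff_eq_or_eq_neg.mp hk3 with rfl | rfl
  · exact Or.inl rfl
  · exact Or.inr rfl

theorem offDiag_I_smul_uniform [Nontrivial H] (hφ : AxisImage φ e α f)
    (hdim : 3 ≤ Module.rank ℂ H) :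
    (∀ x, ⟪e, x⟫_ℂ = 0 → offDiag φ e f (Complex.I • x) = Complex.I • offDiag φ e f x) ∨
      (∀ x, ⟪e, x⟫_ℂ = 0 → offDiag φ e f (Complex.I • x) = -Complex.I • offDiag φ e f x) := by
  by_contra! hc
  obtain ⟨⟨x, hx, hx'⟩, y, hy, hy'⟩ := hc
  have h1 := (hφ.offDiag_I_smul hdim hx).resolve_left hx'
  have h2 := (hφ.offDiag_I_smul hdim hy).resolve_right hy'
  have h3 := hφ.offDiag_I_smul hdim (x := x + y) (by rw [inner_add_right, hx, hy, add_zero])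
  rw [smul_add, hφ.offDiag_add, hφ.offDiag_add, h1, h2] at h3
  rw [h1] at hx'
  rw [h2] at hy'
  rcases h3 with h3 | h3
  · exact hx' (add_right_cancel (h3.trans (smul_add _ _ _)))
  · exact hy' (add_left_cancel (h3.trans (smul_add _ _ _)))

theorem offDiag_smul_of_I [Nontrivial H] (hφ : AxisImage φ e α f) {k : ℂ}
    (h : ∀ x, ⟪e, x⟫_ℂ = 0 → offDiag φ e f (Complex.I • x) = k • offDiag φ e f x) (c : ℂ) {x : H}
    (hx : ⟪e, x⟫_ℂ = 0) :
    offDiag φ e f (c • x) = ((c.re : ℂ) + c.im * k) • offDiag φ e f x := by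
  have hix : ⟪e, Complex.I • x⟫_ℂ = 0 := by rw [inner_smul_right, hx, mul_zero]
  conv_lhs => rw [← Complex.re_add_im c, add_smul, mul_smul]
  rw [hφ.offDiag_add, hφ.offDiag_real_smul hx, hφ.offDiag_real_smul hix, h x hx, add_smul, mul_smul]

section Semilinear

variable {σ : ℂ →+* ℂ}

theorem inner_sub_axis {E : Type*} [NormedAddCommGroup E] [InnerProductSpace ℂ E]
    {e : E} (he : ‖e‖ = 1) (x : E) : ⟪e, x - ⟪e, x⟫_ℂ • e⟫_ℂ = 0 := by
  rw [inner_sub_right, inner_smul_right, inner_self_of_unit he, mul_one, sub_self]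

/-- The semilinear map implementing `φ`. -/
def implementer (hφ : AxisImage φ e α f)
    (hσ : ∀ (c : ℂ) (x : H), ⟪e, x⟫_ℂ = 0 → offDiag φ e f (c • x) = σ c • offDiag φ e f x) :
    H →ₛₗ[σ] H where
  toFun x := σ ⟪e, x⟫_ℂ • f + ((α⁻¹ : ℝ) : ℂ) • offDiag φ e f (x - ⟪e, x⟫_ℂ • e)
  map_add' x y := by
    rw [inner_add_right, show x + y - (⟪e, x⟫_ℂ + ⟪e, y⟫_ℂ) • e =
      (x - ⟪e, x⟫_ℂ • e) + (y - ⟪e, y⟫_ℂ • e) by module, hφ.offDiag_add, _root_.map_add]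
    module
  map_smul' c x := by
    rw [inner_smul_right, mul_smul, ← smul_sub, hσ _ _ (inner_sub_axis hφ.norm_source x), map_mul]
    module

variable (hφ : AxisImage φ e α f)
    (hσ : ∀ (c : ℂ) (x : H), ⟪e, x⟫_ℂ = 0 → offDiag φ e f (c • x) = σ c • offDiag φ e f x)

theorem implementer_apply (x : H) : hφ.implementer hσ x =
    σ ⟪e, x⟫_ℂ • f + ((α⁻¹ : ℝ) : ℂ) • offDiag φ e f (x - ⟪e, x⟫_ℂ • e) := rfl

theorem implementer_axis : hφ.implementer hσ e = f := by
  rw [implementer_apply, inner_self_of_unit hφ.norm_source, one_smul, sub_self, hφ.offDiag_zero,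
    map_one, one_smul, smul_zero, add_zero]

variable [Nontrivial H]

theorem norm_sq_smul_add {E : Type*} [NormedAddCommGroup E] [InnerProductSpace ℂ E]
    {u v : E} (hu : ‖u‖ = 1) (h : ⟪u, v⟫_ℂ = 0) (a : ℂ) :
    ‖a • u + v‖ ^ 2 = ‖a‖ ^ 2 + ‖v‖ ^ 2 := by
  rw [@norm_add_sq ℂ, inner_smul_left, h, norm_smul, hu]
  simp

theorem norm_implementer [RingHomIsometric σ] (hdim : 3 ≤ Module.rank ℂ H) (x : H) :
    ‖hφ.implementer hσ x‖ = ‖x‖ := by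
  have hy := inner_sub_axis hφ.norm_source x
  have h0 : |α| ≠ 0 := abs_ne_zero.mpr hφ.ne_zero
  refine (sq_eq_sq₀ (norm_nonneg _) (norm_nonneg _)).mp ?_
  conv_rhs => rw [← add_sub_cancel (⟪e, x⟫_ℂ • e) x]
  rw [implementer_apply, norm_sq_smul_add hφ.norm_source hy, norm_sq_smul_add hφ.norm_target
    (by rw [inner_smul_right, hφ.inner_offDiag hy, mul_zero]), RingHomIsometric.norm_map, norm_smul,
    hφ.norm_offDiag hdim hy, Complex.norm_real, Real.norm_eq_abs, abs_inv,
    inv_mul_cancel_left₀ h0]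

theorem inner_implementer [RingHomIsometric σ] [RingHomInvPair σ σ] (hdim : 3 ≤ Module.rank ℂ H)
    {x y : H} (hxy : ⟪x, y⟫_ℂ = 0) : ⟪hφ.implementer hσ x, hφ.implementer hσ y⟫_ℂ = 0 := by
  let U := hφ.implementer hσ
  have hre : ∀ c : ℂ, RCLike.re (σ c * ⟪U x, U y⟫_ℂ) = 0 := fun c => by
    have h := hφ.norm_implementer hσ hdim (x + c • y)
    rw [_root_.map_add, LinearMap.map_smulₛₗ] at h
    have h2 := congrArg (· ^ 2) h
    simp only [@norm_add_sq ℂ, inner_smul_right, hxy, norm_smul, RingHomIsometric.norm_map,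
      hφ.norm_implementer hσ hdim] at h2
    simpa using h2
  have h := hre (σ (conj ⟪U x, U y⟫_ℂ))
  rw [RingHomInvPair.comp_apply_eq, Complex.conj_mul'] at h
  rw [← Complex.ofReal_pow] at h
  have h' : ‖⟪U x, U y⟫_ℂ‖ ^ 2 = 0 := h
  simpa using h'

theorem scalarEq_map_symRank_self_implementer [RingHomIsometric σ]
    (hconj : ∀ c, σ (conj c) = conj (σ c)) (hdim : 3 ≤ Module.rank ℂ H) (x : H) :
    ScalarEq (φ (symRank x x))
      (α • symRank (hφ.implementer hσ x) (hφ.implementer hσ x)) := by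
  have hy := inner_sub_axis hφ.norm_source x
  have hay : ⟪e, conj ⟪e, x⟫_ℂ • (x - ⟪e, x⟫_ℂ • e)⟫_ℂ = 0 := by
    rw [inner_smul_right, hy, mul_zero]
  have hx : symRank x x = symRank (⟪e, x⟫_ℂ • e + (x - ⟪e, x⟫_ℂ • e))
      (⟪e, x⟫_ℂ • e + (x - ⟪e, x⟫_ℂ • e)) := by rw [add_sub_cancel]
  rw [implementer_apply, hx]
  generalize x - ⟪e, x⟫_ℂ • e = y at *
  generalize ⟪e, x⟫_ℂ = a at *
  have hα := hφ.ne_zero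
  convert (((hφ.toQPreserver.scalarEq_map_smul hdim (‖a‖ ^ 2) (symRank e e)).trans
    (hφ.map_symRank_self.smul _)).add (hφ.scalarEq_map_symRank_self hdim hy)).add
    (ScalarEq.refl ((2 : ℝ) • φ (symRank e (conj a • y)))) using 1
  · rw [symRank_add_self, symRank_smul_smul_self, symRank_smul_left, two_smul, two_smul, hφ.map_add,
      hφ.map_add, hφ.map_add]
  · rw [symRank_add_self, symRank_smul_smul_self, symRank_smul_self, symRank_smul_left (σ a),
      hφ.map_symRank hay, hσ _ _ hy, RingHomIsometric.norm_map, hconj, smul_comm (conj (σ a)),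
      symRank_smul_right]
    simp only [smul_add, smul_smul]
    congr 3 <;> field_simp

theorem scalarEq_map_symRank_implementer [RingHomIsometric σ]
    (hconj : ∀ c, σ (conj c) = conj (σ c)) (hdim : 3 ≤ Module.rank ℂ H) (x y : H) :
    ScalarEq (φ (symRank x y))
      (α • symRank (hφ.implementer hσ x) (hφ.implementer hσ y)) := by
  have h := hφ.scalarEq_map_symRank_self_implementer hσ hconj hdim
  apply ScalarEq.of_smul (two_ne_zero (α := ℝ))
  convert ((h (x + y)).sub (h x)).sub (h y) using 1
  · rw [symRank_add_self, hφ.map_add, hφ.map_add, two_smul, two_smul, hφ.map_add]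
    abel
  · rw [_root_.map_add, symRank_add_self]
    module

end Semilinear

end AxisImage
namespace AxisImage

variable {φ : Obs H → Obs H} {e f : H} {α : ℝ} {σ : ℂ →+* ℂ}

theorem map_apply_implementer [Nontrivial H] [RingHomIsometric σ] [RingHomInvPair σ σ]
    (hφ : AxisImage φ e α f)
    (hσ : ∀ (c : ℂ) (x : H), ⟪e, x⟫_ℂ = 0 → offDiag φ e f (c • x) = σ c • offDiag φ e f x)
    (hconj : ∀ c, σ (conj c) = conj (σ c)) (hdim : 3 ≤ Module.rank ℂ H) (A : Obs H) {x : H}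
    (hx : ‖x‖ = 1) :
    ∃ s : ℝ, (φ A : H →L[ℂ] H) (hφ.implementer hσ x) =
      (α : ℂ) • hφ.implementer hσ ((A : H →L[ℂ] H) x) + (s : ℂ) • hφ.implementer hσ x := by
  obtain ⟨C, r, w, hxw, rfl, hC, hAx, -⟩ := exists_add_symRank A hx
  have hU1 : ‖hφ.implementer hσ x‖ = 1 := (hφ.norm_implementer hσ hdim x).trans hx
  have hUw := inner_eq_zero_symm.mp (hφ.inner_implementer hσ hdim hxw)
  have hCx : Comm (φ C) (symRank (hφ.implementer hσ x) (hφ.implementer hσ x)) := by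
    have := ((hφ.scalarEq_map_symRank_self_implementer hσ hconj hdim x).comm_right
      (hφ.toQPreserver.comm_iff.mpr hC)).smul_right α⁻¹
    rwa [smul_smul, inv_mul_cancel₀ hφ.ne_zero, one_smul] at this
  obtain ⟨s₁, hs₁⟩ := inner_self_apply_real (φ C) (hφ.implementer hσ x)
  have hev := hCx.eigenvector hU1
  obtain ⟨s₂, hs₂⟩ := hφ.scalarEq_map_symRank_implementer hσ hconj hdim x w
  obtain ⟨r', hr'⟩ := Complex.conj_eq_iff_real.mp
    ((hconj (r : ℂ)).symm.trans (congrArg σ (Complex.conj_ofReal r)))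
  refine ⟨s₁ + s₂ - α * r', ?_⟩
  rw [hAx, hφ.map_add, hs₂, _root_.map_add, LinearMap.map_smulₛₗ, hr']
  simp only [selfAdjoint_add_apply, selfAdjoint_smul_apply, symRank_apply, selfAdjoint_one_apply]
  rw [hev, hs₁, hUw, inner_self_of_unit hU1]
  push_cast
  module

theorem implementer_surjective [Nontrivial H] [RingHomIsometric σ] [RingHomInvPair σ σ]
    (hφ : AxisImage φ e α f)
    (hσ : ∀ (c : ℂ) (x : H), ⟪e, x⟫_ℂ = 0 → offDiag φ e f (c • x) = σ c • offDiag φ e f x)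
    (hconj : ∀ c, σ (conj c) = conj (σ c)) (hdim : 3 ≤ Module.rank ℂ H) :
    Function.Surjective (hφ.implementer hσ) := fun z => by
  obtain ⟨A, hA⟩ := hφ.surj (symRank f z)
  obtain ⟨s, hs⟩ := hφ.map_apply_implementer hσ hconj hdim A hφ.norm_source
  rw [hA, implementer_axis, symRank_apply, inner_self_of_unit hφ.norm_target, one_smul] at hs
  refine ⟨σ (α : ℂ) • (A : H →L[ℂ] H) e + σ (s - ⟪z, f⟫_ℂ) • e, ?_⟩
  generalize ⟪z, f⟫_ℂ = k at hs ⊢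
  rw [_root_.map_add, LinearMap.map_smulₛₗ, LinearMap.map_smulₛₗ, implementer_axis,
    RingHomInvPair.comp_apply_eq, RingHomInvPair.comp_apply_eq, eq_sub_of_add_eq' hs]
  module

theorem exists_implementation [Nontrivial H] [RingHomIsometric σ] [RingHomInvPair σ σ]
    (hφ : AxisImage φ e α f)
    (hσ : ∀ (c : ℂ) (x : H), ⟪e, x⟫_ℂ = 0 → offDiag φ e f (c • x) = σ c • offDiag φ e f x)
    (hconj : ∀ c, σ (conj c) = conj (σ c)) (hdim : 3 ≤ Module.rank ℂ H) :
    ∃ U : H ≃ₛₗᵢ[σ] H, ∀ A : Obs H, ∃ s : ℝ, ∀ x : H, (φ A : H →L[ℂ] H) x =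
      (α : ℂ) • U ((A : H →L[ℂ] H) (U.symm x)) + (s : ℂ) • x := by
  let U : H ≃ₛₗᵢ[σ] H := LinearIsometryEquiv.ofSurjective
    ⟨hφ.implementer hσ, hφ.norm_implementer hσ hdim⟩ (hφ.implementer_surjective hσ hconj hdim)
  have hU : ∀ x, hφ.implementer hσ x = U x := fun _ => rfl
  refine ⟨U, fun A => ?_⟩
  let T : H →ₗ[ℂ] H :=
    { toFun := fun x => (φ A : H →L[ℂ] H) x - (α : ℂ) • U ((A : H →L[ℂ] H) (U.symm x))
      map_add' := fun x y => by simp only [_root_.map_add]; module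
      map_smul' := fun c x => by
        simp only [map_smul, LinearIsometryEquiv.map_smulₛₗ, RingHomInvPair.comp_apply_eq,
          RingHom.id_apply]
        module }
  have hT : ∀ x : H, ‖x‖ = 1 → ∃ s : ℝ, T x = (s : ℂ) • x := fun x hx => by
    obtain ⟨s, hs⟩ := hφ.map_apply_implementer hσ hconj hdim A (x := U.symm x)
      ((U.symm.norm_map x).trans hx)
    rw [hU, hU, U.apply_symm_apply] at hs
    exact ⟨s, sub_eq_of_eq_add' hs⟩
  obtain ⟨c, hc⟩ := exists_eq_smul_of_unit_eigenvector T fun x hx => by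
    obtain ⟨s, hs⟩ := hT x hx
    exact ⟨s, hs⟩
  obtain ⟨s, hs⟩ := hT e hφ.norm_source
  have he0 : e ≠ 0 := norm_ne_zero_iff.mp (by rw [hφ.norm_source]; exact one_ne_zero)
  rw [smul_left_injective ℂ he0 ((hc e).symm.trans hs)] at hc
  exact ⟨s, fun x => eq_add_of_sub_eq' (hc x)⟩

end AxisImage

theorem additive_of_forall_apply [Nontrivial H] {φ : Obs H → Obs H}
    (hadd : ∀ A B, φ (A + B) = φ A + φ B) {F : Obs H → H → H} {s : Obs H → ℝ}
    (hF : ∀ A B x, F (A + B) x = F A x + F B x)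
    (h : ∀ A x, (φ A : H →L[ℂ] H) x = F A x + (s A : ℂ) • x) (A B : Obs H) :
    s (A + B) = s A + s B := by
  obtain ⟨x, hx⟩ := exists_ne (0 : H)
  have h1 := h (A + B) x
  rw [hadd, selfAdjoint_add_apply, h, h, hF] at h1
  have h2 : ((s A + s B : ℝ) : ℂ) • x = (s (A + B) : ℂ) • x := by
    apply add_left_cancel (a := F A x + F B x)
    rw [← h1]
    push_cast
    module
  exact (Complex.ofReal_injective (smul_left_injective ℂ hx h2)).symm

theorem stmt3
    (hdim : 3 ≤ Module.rank ℂ H)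
    (φ : selfAdjoint (H →L[ℂ] H) → selfAdjoint (H →L[ℂ] H))
    (hadd : ∀ A B : selfAdjoint (H →L[ℂ] H), φ (A + B) = φ A + φ B)
    (hsurj : Function.Surjective φ)
    (hpres : ∀ A B : selfAdjoint (H →L[ℂ] H), CommQ A B ↔ CommQ (φ A) (φ B)) :
    ∃ c : ℝ, c ≠ 0 ∧ ∃ f : selfAdjoint (H →L[ℂ] H) → ℝ,
      (∀ A B : selfAdjoint (H →L[ℂ] H), f (A + B) = f A + f B) ∧
      ((∃ U : H ≃ₗᵢ[ℂ] H, ∀ (A : selfAdjoint (H →L[ℂ] H)) (x : H),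
          (φ A : H →L[ℂ] H) x = (c : ℂ) • U ((A : H →L[ℂ] H) (U.symm x)) + (f A : ℂ) • x) ∨
       (∃ U : H ≃ₗᵢ⋆[ℂ] H, ∀ (A : selfAdjoint (H →L[ℂ] H)) (x : H),
          (φ A : H →L[ℂ] H) x = (c : ℂ) • U ((A : H →L[ℂ] H) (U.symm x)) + (f A : ℂ) • x)) := by
  obtain ⟨e, he, -⟩ := exists_unit_orthogonal hdim 0 0
  have : Nontrivial H := ⟨e, 0, norm_ne_zero_iff.mp (by rw [he]; exact one_ne_zero)⟩
  have hQ : QPreserver φ := ⟨hadd, hsurj, hpres⟩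
  obtain ⟨α, f, hφ⟩ := hQ.exists_axisImage hdim he
  refine ⟨α, hφ.ne_zero, ?_⟩
  rcases hφ.offDiag_I_smul_uniform hdim with h | h
  · obtain ⟨U, hU⟩ := hφ.exists_implementation (σ := RingHom.id ℂ)
      (fun c x hx => by
        rw [hφ.offDiag_smul_of_I h c hx, Complex.re_add_im, RingHom.id_apply])
      (fun _ => rfl) hdim
    choose s hs using hU
    refine ⟨s, additive_of_forall_apply hadd (fun A B x => ?_) hs, Or.inl ⟨U, hs⟩⟩
    rw [selfAdjoint_add_apply, map_add, smul_add]
  · obtain ⟨U, hU⟩ := hφ.exists_implementation (σ := starRingEnd ℂ)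
      (fun c x hx => by
        rw [hφ.offDiag_smul_of_I h c hx, mul_neg, ← sub_eq_add_neg]
        congr 1
        apply Complex.ext <;> simp)
      (fun _ => rfl) hdim
    choose s hs using hU
    refine ⟨s, additive_of_forall_apply hadd (fun A B x => ?_) hs, Or.inr ⟨U, hs⟩⟩
    rw [selfAdjoint_add_apply, map_add, smul_add]
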